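/- arXiv:2310.16674 — 4 statements merged into one kernel-verified Lean document; each statement's English description precedes it below -/
import Mathlib

section
/- Let m ∈ ℕ, n ≥ m+1 and α ∈ ℝ. For every x ∈ ℝ, lim_{β→∞} β^{n} P̂^{(III,m)}_n(1 − 2x/β; α, β) = (−2)^{n} L̂^{(III,m)}_n(x; α), the limit being taken along real β → +∞ (for all sufficiently large β all occurring polynomials are defined). -/
open Finset Filter Topology

/-- Monic Laguerre polynomial `L_n^{(α)}(x)`. -/
noncomputable def lagP (n : ℕ) (α x : ℝ) : ℝ :=
  ∑ k ∈ Finset.range (n + 1),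
    (-1 : ℝ) ^ (n - k) * ((n.factorial : ℝ) / (k.factorial : ℝ)) *
      ((∏ j ∈ Finset.Icc (k + 1) n, (α + (j : ℝ))) / ((n - k).factorial : ℝ)) * x ^ k

/-- Pochhammer symbol `(a)_n = a (a+1) ⋯ (a+n−1)`. -/
noncomputable def poch (a : ℝ) (n : ℕ) : ℝ := ∏ j ∈ Finset.range n, (a + (j : ℝ))

/-- Monic Jacobi polynomial `P_n^{(α,β)}(x)`. -/
noncomputable def jacP (n : ℕ) (α β x : ℝ) : ℝ :=
  (2 ^ n * (n.factorial : ℝ) / poch ((n : ℝ) + α + β + 1) n) *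
    ∑ s ∈ Finset.range (n + 1),
      ((∏ j ∈ Finset.Icc (s + 1) n, (α + (j : ℝ))) / ((n - s).factorial : ℝ)) *
        ((∏ j ∈ Finset.Icc (n - s + 1) n, (β + (j : ℝ))) / (s.factorial : ℝ)) *
        ((x - 1) / 2) ^ s * ((x + 1) / 2) ^ (n - s)

/-- Monic Hermite polynomial, as a polynomial function on `ℂ`. -/
noncomputable def hermC (n : ℕ) (z : ℂ) : ℂ :=
  ∑ k ∈ Finset.range (n / 2 + 1),
    (-1 : ℂ) ^ k *
      ((n.factorial : ℂ) / ((k.factorial : ℂ) * ((n - 2 * k).factorial : ℂ) * 4 ^ k)) *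
      z ^ (n - 2 * k)

/-- Type I `X_m`-Laguerre exceptional orthogonal polynomial `L̂^{(I,m)}_n(x;α)`. -/
noncomputable def lagI (m n : ℕ) (α x : ℝ) : ℝ :=
  (-1 : ℝ) ^ m * (lagP m (α + 1) (-x) * lagP n α x
    - (n : ℝ) * lagP m α (-x) * lagP (n - 1) (α + 1) x)

/-- Type II `X_m`-Laguerre exceptional orthogonal polynomial `L̂^{(II,m)}_n(x;α)`. -/
noncomputable def lagII (m n : ℕ) (α x : ℝ) : ℝ :=
  (1 / (α + (n : ℝ) - (m : ℝ))) *
    ((n : ℝ) * x * lagP m (-α) x * lagP (n - 1) (α + 1) x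
      - ((m : ℝ) - α) * lagP m (-α - 1) x * lagP n α x)

/-- Type III `X_m`-Laguerre exceptional orthogonal polynomial `L̂^{(III,m)}_n(x;α)`. -/
noncomputable def lagIII (m n : ℕ) (α x : ℝ) : ℝ :=
  if n = 0 then 1 else
    (-1 : ℝ) ^ m * (lagP m (-α) (-x) * lagP (n - m) (α - 1) x
      - (m : ℝ) * x * lagP (m - 1) (-α + 1) (-x) * lagP (n - m - 1) α x)

/-- Type I `X_m`-Jacobi exceptional orthogonal polynomial `P̂^{(I,m)}_n(x;α,β)`. -/
noncomputable def jacI (m n : ℕ) (α β x : ℝ) : ℝ :=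
  (1 / (β + (n : ℝ) - (m : ℝ))) *
    (jacP m α (-β) x * ((n : ℝ) * (1 + x) * jacP (n - 1) (α + 1) (β + 1) x
        + β * jacP n α β x)
      - (m : ℝ) * (1 + x) * jacP (m - 1) (α + 1) (-β + 1) x * jacP n α β x)

/-- Type II `X_m`-Jacobi exceptional orthogonal polynomial `P̂^{(II,m)}_n(x;α,β)`. -/
noncomputable def jacII (m n : ℕ) (α β x : ℝ) : ℝ :=
  (1 / ((m : ℝ) - (n : ℝ) - α)) *
    (jacP m (-α) β x * ((n : ℝ) * (1 - x) * jacP (n - 1) (α + 1) (β + 1) x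
        - α * jacP n α β x)
      - (m : ℝ) * (1 - x) * jacP (m - 1) (-α + 1) (β + 1) x * jacP n α β x)

/-- Type III `X_m`-Jacobi exceptional orthogonal polynomial `P̂^{(III,m)}_n(x;α,β)`. -/
noncomputable def jacIII (m n : ℕ) (α β x : ℝ) : ℝ :=
  if n = 0 then 1 else
    (1 / (α + β + (n : ℝ) - 2 * (m : ℝ) - 1)) *
      ((α + β + (n : ℝ) - (m : ℝ) - 1) * jacP m (-α) (-β) x * jacP (n - m) (α - 1) (β - 1) x
        + (m : ℝ) * (1 - x ^ 2) * jacP (m - 1) (-α + 1) (-β + 1) x * jacP (n - m - 1) α β x)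

/-- Type III `X_m`-Hermite exceptional orthogonal polynomial `Ĥ^{(III,m)}_n(x)`
(a real polynomial, expressed via complex Hermite values). -/
noncomputable def hermIII (m n : ℕ) (x : ℝ) : ℂ :=
  if n = 0 then 1 else
    Complex.I ^ m * (hermC m (Complex.I * x) * hermC (n - m) (x : ℂ)
      + Complex.I * ((m : ℂ) / 2) * hermC (m - 1) (Complex.I * x) * hermC (n - m - 1) (x : ℂ))

lemma aux_lin (e c : ℝ) : Tendsto (fun β : ℝ => (e * β + c) / β) atTop (𝓝 e) := by
  have h1 : Tendsto (fun β : ℝ => e + c * β⁻¹) atTop (𝓝 (e + c * 0)) :=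
    tendsto_const_nhds.add (tendsto_inv_atTop_zero.const_mul c)
  rw [mul_zero, add_zero] at h1
  refine h1.congr' ?_
  filter_upwards [eventually_gt_atTop 0] with β hβ
  field_simp

lemma aux_jac (k : ℕ) (a e c x : ℝ) (he : e * e = 1) (B : ℝ → ℝ) (hB : ∀ β, B β = e * β + c) :
    Tendsto (fun β : ℝ => β ^ k * jacP k a (B β) (1 - 2 * x / β)) atTop
      (𝓝 ((-2 * e) ^ k * lagP k a (e * x))) := by
  have he0 : e ≠ 0 := by rintro rfl; simp at he
  have hei : e⁻¹ = e := inv_eq_of_mul_eq_one_left he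
  have hp : Tendsto (fun β : ℝ => poch ((k : ℝ) + a + B β + 1) k / β ^ k) atTop (𝓝 (e ^ k)) := by
    have h := tendsto_finsetProd (Finset.range k)
      (fun (j : ℕ) _ => aux_lin e ((k : ℝ) + a + c + 1 + j))
    simp only [Finset.prod_const, Finset.card_range] at h
    refine h.congr fun β => ?_
    rw [Finset.prod_div_distrib, Finset.prod_const, Finset.card_range, poch]
    congr 1
    refine Finset.prod_congr rfl fun j _ => ?_
    rw [hB]; ring
  have hp' := hp.inv₀ (pow_ne_zero k he0)
  have hx0 : Tendsto (fun β : ℝ => 1 - x * β⁻¹) atTop (𝓝 (1 - x * 0)) :=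
    tendsto_const_nhds.sub (tendsto_inv_atTop_zero.const_mul x)
  rw [mul_zero, sub_zero] at hx0
  have ht : Tendsto (fun β : ℝ => ∑ s ∈ Finset.range (k + 1),
      ((∏ j ∈ Finset.Icc (s + 1) k, (a + (j : ℝ))) / ((k - s).factorial : ℝ)) *
        ((∏ j ∈ Finset.Icc (k - s + 1) k, ((e * β + (c + (j : ℝ))) / β)) / (s.factorial : ℝ)) *
        (-x) ^ s * (1 - x * β⁻¹) ^ (k - s)) atTop (𝓝 (∑ s ∈ Finset.range (k + 1),
      ((∏ j ∈ Finset.Icc (s + 1) k, (a + (j : ℝ))) / ((k - s).factorial : ℝ)) *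
        ((∏ j ∈ Finset.Icc (k - s + 1) k, e) / (s.factorial : ℝ)) *
        (-x) ^ s * 1 ^ (k - s))) := by
    refine tendsto_finsetSum _ fun s _ => ?_
    refine Tendsto.mul (Tendsto.mul (Tendsto.const_mul _ (Tendsto.div_const ?_ _))
      tendsto_const_nhds) (hx0.pow _)
    exact tendsto_finsetProd _ fun j _ => aux_lin e (c + j)
  have hall := (hp'.const_mul (2 ^ k * (k.factorial : ℝ))).mul ht
  have hlim : 2 ^ k * (k.factorial : ℝ) * (e ^ k)⁻¹ * (∑ s ∈ Finset.range (k + 1),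
      ((∏ j ∈ Finset.Icc (s + 1) k, (a + (j : ℝ))) / ((k - s).factorial : ℝ)) *
        ((∏ j ∈ Finset.Icc (k - s + 1) k, e) / (s.factorial : ℝ)) *
        (-x) ^ s * 1 ^ (k - s)) = (-2 * e) ^ k * lagP k a (e * x) := by
    rw [lagP, Finset.mul_sum, Finset.mul_sum]
    refine Finset.sum_congr rfl fun s hs => ?_
    have hs' : s ≤ k := by simpa [Nat.lt_succ_iff] using hs
    rw [Finset.prod_const, Nat.card_Icc, show k + 1 - (k - s + 1) = s by omega, ← inv_pow, hei]
    have h1 : (-2 * e) ^ k = (-1) ^ (k - s) * (-1) ^ s * 2 ^ k * e ^ k := by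
      rw [← pow_add, Nat.sub_add_cancel hs', ← mul_pow, ← mul_pow]; norm_num
    have h2 : ((-1 : ℝ) ^ (k - s)) * (-1) ^ (k - s) = 1 := by
      rw [← mul_pow]; norm_num
    rw [h1, neg_pow x s, mul_pow, one_pow]
    linear_combination (-(-1 : ℝ) ^ s * 2 ^ k * e ^ k * ((k.factorial : ℝ) / (s.factorial : ℝ)) *
      ((∏ j ∈ Finset.Icc (s + 1) k, (a + (j : ℝ))) / ((k - s).factorial : ℝ)) * e ^ s * x ^ s) * h2
  rw [hlim] at hall
  refine hall.congr' ?_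
  filter_upwards [eventually_gt_atTop 0] with β hβ
  rw [jacP, inv_div, ← mul_assoc]
  congr 1
  · ring
  · refine Finset.sum_congr rfl fun s hs => ?_
    have hs' : s ≤ k := by simpa [Nat.lt_succ_iff] using hs
    rw [Finset.prod_div_distrib, Finset.prod_const, Nat.card_Icc,
      show k + 1 - (k - s + 1) = s by omega,
      show (1 - 2 * x / β - 1) / 2 = -x / β by ring,
      show (1 - 2 * x / β + 1) / 2 = 1 - x * β⁻¹ by ring, div_pow,
      Finset.prod_congr rfl (fun (j : ℕ) _ => show e * β + (c + (j : ℝ)) = B β + j by rw [hB]; ring)]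
    ring

theorem stmt2 (m n : ℕ) (hn : m + 1 ≤ n) (α x : ℝ) :
    Filter.Tendsto (fun β : ℝ => β ^ n * jacIII m n α β (1 - 2 * x / β)) Filter.atTop
      (nhds ((-2 : ℝ) ^ n * lagIII m n α x)) := by
  
  have hJ1 := aux_jac m (-α) (-1) 0 x (by norm_num) (fun β => -β) (fun β => by ring)
  have hJ2 := aux_jac (n - m) (α - 1) 1 (-1) x (by norm_num) (fun β => β - 1) (fun β => by ring)
  have hJ3 := aux_jac (m - 1) (-α + 1) (-1) 1 x (by norm_num) (fun β => -β + 1) (fun β => by ring)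
  have hJ4 := aux_jac (n - m - 1) α 1 0 x (by norm_num) (fun β => β) (fun β => by ring)
  have hD := (aux_lin 1 (α + (n : ℝ) - 2 * (m : ℝ) - 1)).inv₀ one_ne_zero
  have hN := aux_lin 1 (α + (n : ℝ) - (m : ℝ) - 1)
  have hX := aux_lin (4 * x) (-4 * x ^ 2)
  have hall := hD.mul (((hN.mul hJ1).mul hJ2).add (((hX.const_mul (m : ℝ)).mul hJ3).mul hJ4))
  have hn0 : n ≠ 0 := by omega
  obtain ⟨r, rfl⟩ : ∃ r, n = m + r + 1 := ⟨n - m - 1, by omega⟩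
  have e1 : m + r + 1 - m = r + 1 := by omega
  have e2 : r + 1 - 1 = r := by omega
  simp only [e1, e2] at hall
  have hlim : ∀ A B C D : ℝ, (1 : ℝ)⁻¹ * (1 * ((-2 * -1) ^ m * A) * ((-2 * 1) ^ (r + 1) * B) +
      (m : ℝ) * (4 * x) * ((-2 * -1) ^ (m - 1) * C) * ((-2 * 1) ^ r * D)) =
      (-2) ^ (m + r + 1) * ((-1) ^ m * (A * B - m * x * C * D)) := by
    intro A B C D
    have h2 : (2 : ℝ) ^ m = (-2) ^ m * (-1) ^ m := by rw [← mul_pow]; norm_num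
    rcases m with _ | m
    · simp; ring
    · have h3 : (2 : ℝ) ^ m = (-2) ^ m * (-1) ^ m := by rw [← mul_pow]; norm_num
      norm_num [h3, h2]
      ring
  rw [hlim] at hall
  rw [lagIII, if_neg hn0]
  simp only [e1, e2]
  rw [show -x = -1 * x by ring]
  simp only [one_mul] at hall ⊢
  refine hall.congr' ?_
  filter_upwards [eventually_gt_atTop 0,
    eventually_gt_atTop (-(α + ((m + r + 1 : ℕ) : ℝ) - 2 * (m : ℝ) - 1))] with β hβ hβ2
  rw [jacIII, if_neg hn0]
  simp only [e1, e2]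
  generalize jacP m (-α) (-β) (1 - 2 * x / β) = A
  generalize jacP (r + 1) (α - 1) (β - 1) (1 - 2 * x / β) = B
  generalize jacP (m - 1) (-α + 1) (-β + 1) (1 - 2 * x / β) = C
  generalize jacP r α β (1 - 2 * x / β) = D
  have hd : β + (α + ((m + r + 1 : ℕ) : ℝ) - 2 * (m : ℝ) - 1) ≠ 0 := by linarith
  rw [show α + β + ((m + r + 1 : ℕ) : ℝ) - 2 * (m : ℝ) - 1
    = β + (α + ((m + r + 1 : ℕ) : ℝ) - 2 * (m : ℝ) - 1) by ring]
  generalize β + (α + ((m + r + 1 : ℕ) : ℝ) - 2 * (m : ℝ) - 1) = d at hd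
  generalize ((m + r + 1 : ℕ) : ℝ) = N
  rcases m with _ | m
  · simp
    field_simp
    ring
  · simp only [Nat.add_sub_cancel]
    field_simp
    ring
end

section
/- Let m ≥ 1 and n ≥ m be integers and α, β ∈ ℝ be such that α+1+n−2m ≠ 0 and all occurring monic Jacobi polynomials are defined. Then for every x ∈ ℝ, (n−m)(x−1) P_m^{(−α−1,β−1)}(x) P_{n−m−1}^{(α+2,β)}(x) + (α+1−m) P_m^{(−α−2,β)}(x) P_{n−m}^{(α+1,β−1)}(x) = (α+1+n−2m) P̂^{(II,m)}_{n−m}(x; α+1, β−1). (This identifies the X_m-Jacobi exceptional polynomials of Gómez-Ullate–Marcellán–Milson with the type II X_m-Jacobi exceptional orthogonal polynomials up to an explicit constant factor.) -/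
open Finset Filter Topology

theorem aux_poch_back (a : ℝ) (d : ℕ) : poch a (d + 1) = poch a d * (a + d) := by
  simp [poch, Finset.prod_range_succ]

theorem aux_poch_front (a : ℝ) (d : ℕ) : poch a (d + 1) = a * poch (a + 1) d := by
  unfold poch
  rw [Finset.prod_range_succ', mul_comm]
  congr 1
  · simp
  · apply Finset.prod_congr rfl
    intro i _
    push_cast
    ring

theorem aux_prod (c : ℝ) (s d : ℕ) :
    ∏ j ∈ Finset.Icc (s + 1) (s + d), (c + (j : ℝ)) = poch (c + s + 1) d := by
  induction d with
  | zero => simp [poch]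
  | succ d ih =>
    rw [aux_poch_back, ← ih, ← add_assoc, Finset.prod_Icc_succ_top (by omega)]
    push_cast
    ring

theorem aux_sum (M : ℕ) (g b u v : ℝ) :
    (g + (M + 1 : ℕ)) * (∑ s ∈ Finset.range (M + 1 + 1),
      ((∏ j ∈ Finset.Icc (s + 1) (M + 1), (g - 1 + (j : ℝ))) / ((M + 1 - s).factorial : ℝ)) *
        ((∏ j ∈ Finset.Icc (M + 1 - s + 1) (M + 1), (b + 1 + (j : ℝ))) / (s.factorial : ℝ)) *
        u ^ s * v ^ (M + 1 - s)) =
    g * (∑ s ∈ Finset.range (M + 1 + 1),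
      ((∏ j ∈ Finset.Icc (s + 1) (M + 1), (g + (j : ℝ))) / ((M + 1 - s).factorial : ℝ)) *
        ((∏ j ∈ Finset.Icc (M + 1 - s + 1) (M + 1), (b + (j : ℝ))) / (s.factorial : ℝ)) *
        u ^ s * v ^ (M + 1 - s)) +
    ((M + 1 : ℕ) + g + b + 1) * u * (∑ s ∈ Finset.range (M + 1),
      ((∏ j ∈ Finset.Icc (s + 1) M, (g + 1 + (j : ℝ))) / ((M - s).factorial : ℝ)) *
        ((∏ j ∈ Finset.Icc (M - s + 1) M, (b + 1 + (j : ℝ))) / (s.factorial : ℝ)) *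
        u ^ s * v ^ (M - s)) := by
  rw [Finset.sum_range_succ', Finset.sum_range_succ' _ (M + 1), mul_add, mul_add, add_right_comm]
  congr 1
  · rw [Finset.mul_sum, Finset.mul_sum, Finset.mul_sum, ← Finset.sum_add_distrib]
    apply Finset.sum_congr rfl
    intro t ht
    obtain ⟨d, rfl⟩ : ∃ d, M = t + d := Nat.exists_eq_add_of_le (by simp at ht; omega)
    have e1 : t + d + 1 - (t + 1) = d := by omega
    have e2 : t + d - t = d := by omega
    rw [e1, e2]
    have a1 := aux_prod (g - 1) (t + 1) d
    have a2 := aux_prod g (t + 1) d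
    have a3 := aux_prod (g + 1) t d
    have b1 := aux_prod (b + 1) d (t + 1)
    have b2 := aux_prod b d (t + 1)
    have b3 := aux_prod (b + 1) d t
    rw [show t + 1 + d = t + d + 1 by omega] at a1 a2
    rw [show d + (t + 1) = t + d + 1 by omega] at b1 b2
    rw [show d + t = t + d by omega] at b3
    rw [a1, a2, a3, b1, b2, b3, aux_poch_back (b + 1 + d + 1) t, aux_poch_front (b + d + 1) t]
    have c1 : (g + (t + d + 1 : ℕ)) * poch (g - 1 + (t + 1 : ℕ) + 1) d
        = (g + (t + 1 : ℕ)) * poch (g + (t + 1 : ℕ) + 1) d := by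
      have f := aux_poch_front (g + (t + 1 : ℕ)) d
      rw [aux_poch_back] at f
      rw [← f, show g - 1 + ((t + 1 : ℕ) : ℝ) + 1 = g + (t + 1 : ℕ) by ring]
      push_cast
      ring
    rw [show g + 1 + (t : ℝ) + 1 = g + (t + 1 : ℕ) + 1 by push_cast; ring,
      show b + (d : ℝ) + 1 + 1 = b + 1 + d + 1 by ring]
    generalize poch (g + (t + 1 : ℕ) + 1) d = A at *
    generalize poch (g - 1 + (t + 1 : ℕ) + 1) d = A' at *
    generalize poch (b + 1 + d + 1) t = B at *
    have hd : (d.factorial : ℝ) ≠ 0 := by positivity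
    have ht' : (t.factorial : ℝ) ≠ 0 := by positivity
    have ht1 : (t : ℝ) + 1 ≠ 0 := by positivity
    rw [Nat.factorial_succ]
    push_cast at *
    field_simp
    linear_combination (B * (b + 1 + d + 1 + t) * u ^ (t + 1) * v ^ d) * c1
  · have a1 := aux_prod (g - 1) 0 (M + 1)
    have a2 := aux_prod g 0 (M + 1)
    simp only [zero_add] at a1 a2
    simp only [zero_add, a1, a2]
    have c1 : (g + (M + 1 : ℕ)) * poch (g - 1 + (0 : ℕ) + 1) (M + 1)
        = g * poch (g + (0 : ℕ) + 1) (M + 1) := by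
      have f := aux_poch_front g (M + 1)
      rw [aux_poch_back] at f
      simp only [Nat.cast_zero, add_zero, sub_add_cancel]
      rw [← f]; ring
    simp
    simp at c1
    linear_combination (v ^ (M + 1) / ((M + 1).factorial : ℝ)) * c1

theorem aux_jac_s11 (m : ℕ) (hm : 1 ≤ m) (g b x : ℝ) (hp : poch ((m : ℝ) + g + b + 1) m ≠ 0) :
    (g + m) * jacP m (g - 1) (b + 1) x
      = g * jacP m g b x + m * (x - 1) * jacP (m - 1) (g + 1) (b + 1) x := by
  obtain ⟨M, rfl⟩ : ∃ M, m = M + 1 := ⟨m - 1, by omega⟩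
  have S := aux_sum M g b ((x - 1) / 2) ((x + 1) / 2)
  unfold jacP
  rw [Nat.add_sub_cancel]
  rw [show ((M + 1 : ℕ) : ℝ) + (g - 1) + (b + 1) + 1 = (M + 1 : ℕ) + g + b + 1 by ring,
    show (M : ℝ) + (g + 1) + (b + 1) + 1 = (M + 1 : ℕ) + g + b + 1 + 1 by push_cast; ring]
  rw [aux_poch_front] at hp ⊢
  have h1 := left_ne_zero_of_mul hp
  have h2 := right_ne_zero_of_mul hp
  generalize poch ((M + 1 : ℕ) + g + b + 1 + 1) M = p at *
  generalize hq : ((M + 1 : ℕ) : ℝ) + g + b + 1 = q at *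
  rw [mul_left_comm, S, Nat.factorial_succ, pow_succ]
  push_cast
  field_simp

theorem stmt11 (m n : ℕ) (hm : 1 ≤ m) (hn : m ≤ n) (α β : ℝ)
    (h : α + 1 + (n : ℝ) - 2 * (m : ℝ) ≠ 0)
    (h1 : poch ((m : ℝ) + (-α - 1) + (β - 1) + 1) m ≠ 0)
    (h2 : poch (((n - m - 1 : ℕ) : ℝ) + (α + 2) + β + 1) (n - m - 1) ≠ 0)
    (h3 : poch ((m : ℝ) + (-α - 2) + β + 1) m ≠ 0)
    (h4 : poch (((n - m : ℕ) : ℝ) + (α + 1) + (β - 1) + 1) (n - m) ≠ 0)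
    (h5 : poch (((m - 1 : ℕ) : ℝ) + -α + β + 1) (m - 1) ≠ 0) (x : ℝ) :
    ((n : ℝ) - (m : ℝ)) * (x - 1) * jacP m (-α - 1) (β - 1) x * jacP (n - m - 1) (α + 2) β x
        + (α + 1 - (m : ℝ)) * jacP m (-α - 2) β x * jacP (n - m) (α + 1) (β - 1) x
      = (α + 1 + (n : ℝ) - 2 * (m : ℝ)) * jacII m (n - m) (α + 1) (β - 1) x := by
  have J := aux_jac_s11 m hm (-α - 1) (β - 1) x h1
  unfold jacII
  rw [show -α - 1 - 1 = -α - 2 by ring, show β - 1 + 1 = β by ring,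
    show -α - 1 + 1 = -α by ring] at J
  rw [show -(α + 1) + 1 = -α by ring, show -(α + 1) = -α - 1 by ring,
    show β - 1 + 1 = β by ring, show α + 1 + 1 = α + 2 by ring, Nat.cast_sub hn,
    show (m : ℝ) - (n - m) - (α + 1) = -(α + 1 + n - 2 * m) by ring, ← mul_assoc,
    show (α + 1 + (n : ℝ) - 2 * m) * (1 / -(α + 1 + n - 2 * m)) = -1 by
      rw [one_div, inv_neg, mul_neg, mul_inv_cancel₀ h]]
  linear_combination (-jacP (n - m) (α + 1) (β - 1) x) * J
end

section
/- Let m ∈ ℕ, n ≥ m+2 an integer and α ∈ ℝ. Then for every x ∈ ℝ, L̂^{(III,m)}_n(x;α) = (−1)^{m+1} [(n−m−1) x L_m^{(−α)}(−x) L_{n−m−2}^{(α+1)}(x) + L_{m+1}^{(−α−1)}(−x) L_{n−m−1}^{(α)}(x)]. -/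
open Finset Filter Topology

noncomputable def dco (n k : ℕ) (α : ℝ) : ℝ :=
  (-1 : ℝ) ^ (n + k) * (n.choose k : ℝ) * ∏ j ∈ Finset.Ico (k + 1) (n + 1), (α + (j : ℝ))

lemma lagP_eq (n : ℕ) (α x : ℝ) :
    lagP n α x = ∑ k ∈ Finset.range (n + 1), dco n k α * x ^ k := by
  unfold lagP dco
  apply Finset.sum_congr rfl
  intro k hk
  have hk' : k ≤ n := by
    have := Finset.mem_range.mp hk
    omega
  have h1 : (-1 : ℝ) ^ (n + k) = (-1 : ℝ) ^ (n - k) := by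
    have : n + k = (n - k) + 2 * k := by omega
    rw [this, pow_add, pow_mul]
    simp
  have h2 : Finset.Icc (k + 1) n = Finset.Ico (k + 1) (n + 1) := by
    ext j
    simp only [Finset.mem_Icc, Finset.mem_Ico]
    omega
  rw [h1, h2, Nat.cast_choose ℝ hk']
  have := Nat.factorial_ne_zero k
  have := Nat.factorial_ne_zero (n - k)
  field_simp

lemma dco_top (n : ℕ) (α : ℝ) : dco n (n + 1) α = 0 := by
  simp [dco]

lemma prod_shift (a b : ℕ) (α : ℝ) :
    ∏ j ∈ Finset.Ico (a + 1) (b + 1), (α + (j : ℝ))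
      = ∏ j ∈ Finset.Ico a b, (α + 1 + (j : ℝ)) := by
  rw [← Finset.prod_Ico_add' (fun j : ℕ => α + (j : ℝ)) a b 1]
  apply Finset.prod_congr rfl
  intro j _
  push_cast
  ring

lemma dco_rec (M k : ℕ) (hk : k < M + 2) (α : ℝ) :
    dco (M + 2) (k + 1) (α - 1)
      = dco (M + 1) k α - α * dco (M + 1) (k + 1) α - ((M : ℝ) + 1) * dco M k (α + 1) := by
  unfold dco
  rw [prod_shift (k + 1) (M + 2) (α - 1), ← prod_shift (k + 1) (M + 1) α]
  simp only [sub_add_cancel]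
  have hc : (((M + 2).choose (k + 1) : ℕ) : ℝ)
      = ((M + 1).choose k : ℝ) + ((M + 1).choose (k + 1) : ℝ) := by
    rw [Nat.choose_succ_succ]; push_cast; rfl
  have hd : ((M : ℝ) + 1) * (M.choose k : ℝ)
      = ((M + 1).choose (k + 1) : ℝ) * ((k : ℝ) + 1) := by
    exact_mod_cast Nat.add_one_mul_choose_eq M k
  rcases Nat.lt_succ_iff_lt_or_eq.mp hk with h | h
  · rw [Finset.prod_eq_prod_Ico_succ_bot (show k + 1 < M + 1 + 1 by omega), hc]
    have e1 : (-1 : ℝ) ^ (M + 2 + (k + 1)) = - (-1) ^ (M + k) := by ring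
    have e2 : (-1 : ℝ) ^ (M + 1 + k) = - (-1) ^ (M + k) := by ring
    have e3 : (-1 : ℝ) ^ (M + 1 + (k + 1)) = (-1) ^ (M + k) := by ring
    rw [e1, e2, e3]
    push_cast
    linear_combination ((-1 : ℝ) ^ (M + k) * ∏ j ∈ Finset.Ico (k + 1 + 1) (M + 1 + 1), (α + (j : ℝ))) * hd
  · subst h
    have e1 : (-1 : ℝ) ^ (M + 2 + (M + 1 + 1)) = (-1) ^ (M + 1 + (M + 1)) := by ring
    simp [e1]

lemma lagP_rec (N : ℕ) (α x : ℝ) :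
    lagP (N + 1) (α - 1) x
      = (x - α) * lagP N α x - (N : ℝ) * x * lagP (N - 1) (α + 1) x := by
  rcases N with _ | M
  · simp [lagP_eq, dco, Finset.sum_range_succ]
    ring
  · have hA : lagP (M + 2) (α - 1) x = dco (M + 2) 0 (α - 1)
        + ∑ k ∈ Finset.range (M + 2), dco (M + 2) (k + 1) (α - 1) * x ^ (k + 1) := by
      rw [lagP_eq, Finset.sum_range_succ']; simp [add_comm]
    have hB : lagP (M + 1) α x = dco (M + 1) 0 α
        + ∑ k ∈ Finset.range (M + 2), dco (M + 1) (k + 1) α * x ^ (k + 1) := by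
      rw [lagP_eq, Finset.sum_range_succ', Finset.sum_range_succ _ (M + 1), dco_top]
      simp [add_comm]
    have hC : x * lagP (M + 1) α x
        = ∑ k ∈ Finset.range (M + 2), dco (M + 1) k α * x ^ (k + 1) := by
      rw [lagP_eq, Finset.mul_sum]
      exact Finset.sum_congr rfl fun k _ => by ring
    have hD : x * lagP M (α + 1) x
        = ∑ k ∈ Finset.range (M + 2), dco M k (α + 1) * x ^ (k + 1) := by
      rw [lagP_eq, Finset.mul_sum, Finset.sum_range_succ _ (M + 1), dco_top, zero_mul, add_zero]
      exact Finset.sum_congr rfl fun k _ => by ring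
    have h0 : dco (M + 2) 0 (α - 1) = - α * dco (M + 1) 0 α := by
      unfold dco
      rw [prod_shift 0 (M + 2) (α - 1), sub_add_cancel,
        Finset.prod_eq_prod_Ico_succ_bot (show 0 < M + 2 by omega)]
      simp
      ring
    have hS : ∑ k ∈ Finset.range (M + 2), dco (M + 2) (k + 1) (α - 1) * x ^ (k + 1)
        = ∑ k ∈ Finset.range (M + 2), dco (M + 1) k α * x ^ (k + 1)
          - α * ∑ k ∈ Finset.range (M + 2), dco (M + 1) (k + 1) α * x ^ (k + 1)
          - ((M : ℝ) + 1) * ∑ k ∈ Finset.range (M + 2), dco M k (α + 1) * x ^ (k + 1) := by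
      rw [Finset.mul_sum, Finset.mul_sum, ← Finset.sum_sub_distrib, ← Finset.sum_sub_distrib]
      apply Finset.sum_congr rfl
      intro k hk
      rw [dco_rec M k (Finset.mem_range.mp hk)]
      ring
    rw [← hC, ← hD] at hS
    simp only [Nat.add_sub_cancel]
    push_cast
    linear_combination hA + hS + h0 - (-α) * hB

theorem stmt12 (m n : ℕ) (hn : m + 2 ≤ n) (α x : ℝ) :
    lagIII m n α x
      = (-1 : ℝ) ^ (m + 1) *
          (((n : ℝ) - (m : ℝ) - 1) * x * lagP m (-α) (-x) * lagP (n - m - 2) (α + 1) x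
            + lagP (m + 1) (-α - 1) (-x) * lagP (n - m - 1) α x) := by
  obtain ⟨N, rfl⟩ := Nat.exists_eq_add_of_le hn
  have a1 : m + 2 + N - m = N + 1 + 1 := by omega
  have a4 : m + 2 + N ≠ 0 := by omega
  have h1 := lagP_rec (N + 1) α x
  have h2 := lagP_rec m (-α) (-x)
  unfold lagIII
  rw [if_neg a4, a1, h2]
  simp only [Nat.add_sub_cancel, show N + 1 + 1 - 2 = N by omega] at h1 ⊢
  rw [h1]
  push_cast
  ring
end

section
/- For every integer m ≥ 1 and α ∈ ℝ, and every x ∈ ℝ, L̂^{(III,m−1)}_m(x²; α) = (−1)^m L_m^{(−α−1)}(−x²). -/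
open Finset Filter Topology

noncomputable def cf (n k : ℕ) (a : ℝ) : ℝ :=
  (-1 : ℝ) ^ (n - k) * (n.choose k : ℝ) * ∏ j ∈ Finset.range (n - k), (a + k + 1 + (j : ℝ))

lemma lagP_cf (n N : ℕ) (hN : n + 1 ≤ N) (a z : ℝ) :
    lagP n a z = ∑ k ∈ Finset.range N, cf n k a * z ^ k := by
  rw [← Finset.sum_subset (Finset.range_mono hN)]
  · unfold lagP cf
    refine Finset.sum_congr rfl fun k hk => ?_
    have hk' : k ≤ n := by simp at hk; omega
    have h1 : ∏ j ∈ Finset.Icc (k + 1) n, (a + (j : ℝ))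
        = ∏ j ∈ Finset.range (n - k), (a + k + 1 + (j : ℝ)) := by
      have : Finset.Icc (k + 1) n = Finset.Ico (k + 1) (n + 1) := by
        ext j; simp
      rw [this, Finset.prod_Ico_eq_prod_range]
      have : n + 1 - (k + 1) = n - k := by omega
      rw [this]
      refine Finset.prod_congr rfl fun j _ => ?_
      push_cast; ring
    rw [h1, Nat.cast_choose ℝ hk']
    have := Nat.factorial_ne_zero k
    have := Nat.factorial_ne_zero (n - k)
    field_simp
  · intro k _ hk
    have : n < k := by simp at hk; omega
    simp [cf, Nat.choose_eq_zero_of_lt this]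

lemma cf_rec (q k : ℕ) (hk : k ≤ q + 1) (a : ℝ) :
    cf (q + 2) (k + 1) (a - 1) = cf (q + 1) k a - a * cf (q + 1) (k + 1) a
      - (q + 1) * cf q k (a + 1) := by
  rcases Nat.lt_or_ge q k with h | h
  · obtain rfl : k = q + 1 := by omega
    simp [cf]
  · obtain ⟨d, rfl⟩ := Nat.exists_eq_add_of_le h
    have e1 : k + d + 2 - (k + 1) = d + 1 := by omega
    have e2 : k + d + 1 - k = d + 1 := by omega
    have e3 : k + d + 1 - (k + 1) = d := by omega
    have e4 : k + d - k = d := by omega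
    have hc : ((k + d + 2).choose (k + 1) : ℝ) = (k + d + 1).choose k + (k + d + 1).choose (k + 1) := by
      exact_mod_cast Nat.choose_succ_succ (k + d + 1) k
    have hd : ((k : ℝ) + d + 1) * ((k + d).choose k : ℝ) = (k + d + 1).choose (k + 1) * (k + 1) := by
      exact_mod_cast Nat.add_one_mul_choose_eq (k + d) k
    have p1 : ∏ j ∈ Finset.range (d + 1), (a - 1 + ((k + 1 : ℕ) : ℝ) + 1 + (j : ℝ))
        = (∏ j ∈ Finset.range d, (a + k + 2 + (j : ℝ))) * (a + k + 1) := by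
      rw [Finset.prod_range_succ']
      push_cast
      congr 1
      · exact Finset.prod_congr rfl fun j _ => by ring
      · ring
    have p2 : ∏ j ∈ Finset.range (d + 1), (a + (k : ℝ) + 1 + (j : ℝ))
        = (∏ j ∈ Finset.range d, (a + k + 2 + (j : ℝ))) * (a + k + 1) := by
      rw [Finset.prod_range_succ']
      push_cast
      congr 1
      · exact Finset.prod_congr rfl fun j _ => by ring
      · ring
    have p3 : ∏ j ∈ Finset.range d, (a + ((k + 1 : ℕ) : ℝ) + 1 + (j : ℝ))
        = ∏ j ∈ Finset.range d, (a + k + 2 + (j : ℝ)) :=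
      Finset.prod_congr rfl fun j _ => by push_cast; ring
    have p4 : ∏ j ∈ Finset.range d, (a + 1 + (k : ℝ) + 1 + (j : ℝ))
        = ∏ j ∈ Finset.range d, (a + k + 2 + (j : ℝ)) :=
      Finset.prod_congr rfl fun j _ => by ring
    unfold cf
    rw [e1, e2, e3, e4, p1, p2, p3, p4, hc, pow_succ]
    push_cast
    linear_combination ((-1 : ℝ) ^ d * ∏ j ∈ Finset.range d, (a + k + 2 + (j : ℝ))) * hd

lemma cf_zero (q : ℕ) (a : ℝ) : cf (q + 2) 0 (a - 1) = - a * cf (q + 1) 0 a := by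
  unfold cf
  simp only [Nat.sub_zero, Nat.choose_zero_right]
  rw [Finset.prod_range_succ', pow_succ]
  have : ∏ j ∈ Finset.range (q + 1), (a - 1 + ((0 : ℕ) : ℝ) + 1 + ((j + 1 : ℕ) : ℝ))
      = ∏ j ∈ Finset.range (q + 1), (a + ((0 : ℕ) : ℝ) + 1 + (j : ℝ)) :=
    Finset.prod_congr rfl fun j _ => by push_cast; ring
  rw [this]
  push_cast
  ring

lemma lagP_rec_s13 (q : ℕ) (a z : ℝ) :
    lagP (q + 2) (a - 1) z = (z - a) * lagP (q + 1) a z - (q + 1) * z * lagP q (a + 1) z := by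
  have hA := lagP_cf (q + 1) (q + 2) le_rfl a z
  have hB := lagP_cf (q + 1) (q + 3) (by omega) a z
  rw [Finset.sum_range_succ'] at hB
  rw [lagP_cf (q + 2) (q + 3) le_rfl, lagP_cf q (q + 2) (by omega), Finset.sum_range_succ', cf_zero,
    sub_mul]
  have : ∑ k ∈ Finset.range (q + 2), cf (q + 2) (k + 1) (a - 1) * z ^ (k + 1)
      = z * ∑ k ∈ Finset.range (q + 2), cf (q + 1) k a * z ^ k
        - a * ∑ k ∈ Finset.range (q + 2), cf (q + 1) (k + 1) a * z ^ (k + 1)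
        - (q + 1) * z * ∑ k ∈ Finset.range (q + 2), cf q k (a + 1) * z ^ k := by
    simp only [Finset.mul_sum, ← Finset.sum_sub_distrib]
    refine Finset.sum_congr rfl fun k hk => ?_
    rw [cf_rec q k (by simp at hk; omega)]
    ring
  rw [this, ← hA]
  linear_combination a * hB

theorem stmt13 (m : ℕ) (hm : 1 ≤ m) (α x : ℝ) :
    lagIII (m - 1) m α (x ^ 2) = (-1 : ℝ) ^ m * lagP m (-α - 1) (-x ^ 2) := by
  obtain ⟨p, rfl⟩ : ∃ p, m = p + 1 := ⟨m - 1, by omega⟩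
  have h0 : ∀ a z : ℝ, lagP 0 a z = 1 := fun a z => by simp [lagP]
  have h1 : ∀ a z : ℝ, lagP 1 a z = z - (a + 1) := fun a z => by
    simp [lagP, Finset.sum_range_succ]; ring
  have e : p + 1 - p = 1 := by omega
  rw [lagIII, if_neg (by omega)]
  simp only [Nat.add_sub_cancel, e, Nat.sub_self, h0, h1]
  rcases p with _ | q
  · simp [h0, h1]; ring
  · rw [lagP_rec_s13 q (-α) (-x ^ 2)]
    simp only [Nat.add_sub_cancel]
    push_cast
    ring
end
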